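/- There exists a tossing process T : (ℕ → Bool) → (ℕ → Bool) (measurable and measure-preserving for the fair-coin measure μ) such that for every set D ⊆ (ℕ → Bool) whose complement is μ-null, T is not continuous on D (with respect to the product topology). Consequently T is not equal μ-almost everywhere to any continuous partial tossing process. -/

import Mathlib

open MeasureTheory

/-- The uniform Bernoulli(1/2) ("fair coin") measure on `Bool`. -/
noncomputable def coin : Measure Bool := (PMF.bernoulli 2⁻¹ (by norm_num)).toMeasure

/-- `μ` is the fair-coin measure on Cantor space: the product over `ℕ` of uniform
Bernoulli(1/2) measures, characterized by the fact that all finite-dimensional marginals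
are finite products of `coin`. -/
def IsFairCoin (μ : Measure (ℕ → Bool)) : Prop :=
  IsProjectiveLimit μ (fun J : Finset ℕ => Measure.pi fun _ : J => coin)

theorem coin_singleton (b : Bool) : coin {b} = 2⁻¹ := by
  unfold coin
  rw [PMF.toMeasure_apply_singleton _ _ (measurableSet_singleton b)]
  cases b <;> simp [PMF.bernoulli_apply]

instance : IsProbabilityMeasure coin := by unfold coin; infer_instance

theorem coin_map_not : coin.map not = coin := by
  refine Measure.ext_of_singleton fun b => ?_
  rw [Measure.map_apply (by fun_prop) (measurableSet_singleton b)]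
  have : not ⁻¹' {b} = {!b} := by ext c; cases b <;> cases c <;> simp
  rw [this, coin_singleton, coin_singleton]

theorem fair_eq {μ : Measure (ℕ → Bool)} (hμ : IsFairCoin μ) :
    μ = Measure.infinitePi (fun _ : ℕ => coin) :=
  IsProjectiveLimit.unique hμ (Measure.isProjectiveLimit_infinitePi _)

theorem fair_flip {μ : Measure (ℕ → Bool)} (hμ : IsFairCoin μ) :
    μ.map (fun x i => !(x i)) = μ := by
  have h := Measure.infinitePi_map_pi (μ := fun _ : ℕ => coin) (f := fun _ : ℕ => not)
    (fun _ => by fun_prop)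
  rw [fair_eq hμ]
  simpa only [coin_map_not] using h

theorem fair_singleton {μ : Measure (ℕ → Bool)} (hμ : IsFairCoin μ) (x : ℕ → Bool) :
    μ {x} = 0 := by
  have h : ∀ n : ℕ, μ {x} ≤ 2⁻¹ ^ n := by
    intro n
    calc μ {x} ≤ μ (Set.pi (Finset.range n) (fun i => {x i})) := by
          apply measure_mono; intro y hy; simp_all
      _ = 2⁻¹ ^ n := by
          rw [fair_eq hμ, Measure.infinitePi_pi _ (fun i _ => measurableSet_singleton _)]
          simp [coin_singleton]
  have ht : Filter.Tendsto (fun n : ℕ => (2⁻¹ : ENNReal) ^ n) Filter.atTop (nhds 0) :=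
    ENNReal.tendsto_pow_atTop_nhds_zero_of_lt_one (by simp)
  exact le_antisymm (ge_of_tendsto' ht h) bot_le

theorem fair_open {μ : Measure (ℕ → Bool)} (hμ : IsFairCoin μ) {U : Set (ℕ → Bool)}
    (hU : IsOpen U) (hne : U.Nonempty) : μ U ≠ 0 := by
  obtain ⟨x, hx⟩ := hne
  obtain ⟨I, u, h1, h2⟩ := isOpen_pi_iff.1 hU x hx
  intro h0
  have h3 : μ (Set.pi I (fun i => {x i})) = 0 := by
    refine measure_mono_null (fun y hy => h2 fun i hi => ?_) h0
    have : y i = x i := hy i hi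
    rw [this]; exact (h1 i hi).2
  rw [fair_eq hμ, Measure.infinitePi_pi _ (fun i _ => measurableSet_singleton _)] at h3
  simp [coin_singleton] at h3

theorem exists_toss (μ : Measure (ℕ → Bool)) (hμ : IsFairCoin μ) :
    ∃ T : (ℕ → Bool) → ℕ → Bool,
      Measurable T ∧
      (∀ A : Set (ℕ → Bool), MeasurableSet A → μ (T ⁻¹' A) = μ A) ∧
      (∀ D : Set (ℕ → Bool), μ Dᶜ = 0 → ¬ ContinuousOn T D) := by
  classical
  have hP : IsProbabilityMeasure μ := by rw [fair_eq hμ]; infer_instance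
  set F : (ℕ → Bool) → ℕ → Bool := fun x i => !(x i) with hF
  have hFm : Measurable F := by fun_prop
  have hFc : Continuous F := by
    refine continuous_pi fun i => ?_
    exact (continuous_of_discreteTopology (f := not)).comp (continuous_apply i)
  have hFF : ∀ x, F (F x) = x := by intro x; ext i; simp [hF]
  have hFμ : ∀ A, MeasurableSet A → μ (F ⁻¹' A) = μ A := by
    intro A hA
    rw [← Measure.map_apply hFm hA, fair_flip hμ]
  obtain ⟨Q, hQc, hQd⟩ := TopologicalSpace.exists_countable_dense (ℕ → Bool)
  have hQ0 : μ Q = 0 := by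
    rw [← Set.biUnion_of_singleton Q]
    exact (measure_biUnion_null_iff hQc).2 fun x _ => fair_singleton hμ x
  obtain ⟨U, hQU, hUo, hUlt⟩ := Q.exists_isOpen_lt_of_lt (μ := μ) 2⁻¹ (by rw [hQ0]; simp)
  set V := U ∪ F ⁻¹' U with hV
  have hVo : IsOpen V := hUo.union (hUo.preimage hFc)
  have hVm : MeasurableSet V := hVo.measurableSet
  have hVF : F ⁻¹' V = V := by
    ext x; simp only [hV, Set.mem_preimage, Set.mem_union, hFF]; tauto
  have hVlt : μ V < 1 := by
    calc μ V ≤ μ U + μ (F ⁻¹' U) := measure_union_le _ _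
      _ = μ U + μ U := by rw [hFμ U hUo.measurableSet]
      _ < 2⁻¹ + 2⁻¹ := ENNReal.add_lt_add hUlt hUlt
      _ = 1 := ENNReal.inv_two_add_inv_two
  have hVd : Dense V := hQd.mono (hQU.trans Set.subset_union_left)
  refine ⟨fun x => if x ∈ V then x else F x, Measurable.ite hVm measurable_id hFm, ?_, ?_⟩
  · intro A hA
    rw [← measure_inter_add_diff _ hVm, ← measure_inter_add_diff A hVm]
    congr 1
    · congr 1; ext x
      simp only [Set.mem_inter_iff, Set.mem_preimage]
      constructor <;> rintro ⟨h1, h2⟩ <;> simp_all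
    · rw [← hFμ (A \ V) (hA.diff hVm), Set.preimage_diff, hVF]
      congr 1; ext x
      simp only [Set.mem_diff, Set.mem_preimage]
      constructor <;> rintro ⟨h1, h2⟩ <;> simp_all
  · intro D hD hc
    obtain ⟨x, hxV, hxD⟩ : (Vᶜ ∩ D).Nonempty := by
      by_contra hne
      rw [Set.not_nonempty_iff_eq_empty] at hne
      have hsub : Dᶜᶜ ⊆ V := by
        intro y hy
        by_contra hyV
        have : y ∈ Vᶜ ∩ D := ⟨hyV, by simpa using hy⟩
        simp [hne] at this
      have h1 : (1 : ENNReal) ≤ μ V := by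
        calc (1 : ENNReal) = μ (Dᶜ ∪ Dᶜᶜ) := by rw [Set.union_compl_self, measure_univ]
          _ ≤ μ Dᶜ + μ Dᶜᶜ := measure_union_le _ _
          _ ≤ μ V := by rw [hD, zero_add]; exact measure_mono hsub
      exact absurd hVlt (not_lt.2 h1)
    have hc0 : ContinuousWithinAt (fun y => (if y ∈ V then y else F y) 0) D x :=
      (continuous_apply 0).continuousAt.comp_continuousWithinAt (hc x hxD)
    have h1 : {y | (if y ∈ V then y else F y) 0 = !(x 0)} ∈ nhdsWithin x D := by
      have : ({!(x 0)} : Set Bool) ∈ nhds ((if x ∈ V then x else F x) 0) := by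
        rw [if_neg hxV]; exact (isOpen_discrete _).mem_nhds rfl
      exact hc0 this
    obtain ⟨W, hWo, hxW, hW⟩ := mem_nhdsWithin.1 h1
    set W' := W ∩ (fun y : ℕ → Bool => y 0) ⁻¹' {x 0} with hW'
    have hW'o : IsOpen W' := hWo.inter ((isOpen_discrete _).preimage (continuous_apply 0))
    have hne : (W' ∩ V).Nonempty := hVd.inter_open_nonempty W' hW'o ⟨x, hxW, rfl⟩
    refine fair_open hμ (hW'o.inter hVo) hne (measure_mono_null ?_ hD)
    rintro y ⟨⟨hy1, hy2⟩, hy3⟩ hyD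
    have h := hW ⟨hy1, hyD⟩
    have h2 : y 0 = x 0 := hy2
    simp [hy3, h2] at h

/-- There is a tossing process `T` (measurable and measure-preserving for the fair-coin
measure) that is not continuous on any co-null set; consequently `T` is not equal
μ-almost everywhere to any continuous partial tossing process. -/
theorem stmt7 (μ : Measure (ℕ → Bool)) (hμ : IsFairCoin μ) :
    ∃ T : (ℕ → Bool) → ℕ → Bool,
      Measurable T ∧
      (∀ A : Set (ℕ → Bool), MeasurableSet A → μ (T ⁻¹' A) = μ A) ∧
      (∀ D : Set (ℕ → Bool), μ Dᶜ = 0 → ¬ ContinuousOn T D) ∧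
      ∀ (T' : (ℕ → Bool) → ℕ → Bool) (D : Set (ℕ → Bool)),
        μ Dᶜ = 0 → ContinuousOn T' D →
        (∀ A : Set (ℕ → Bool), MeasurableSet A → μ (D ∩ T' ⁻¹' A) = μ A) →
        ¬ T =ᵐ[μ] T' := by
  obtain ⟨T, h1, h2, h3⟩ := exists_toss μ hμ
  refine ⟨T, h1, h2, h3, fun T' D hD hc _ he => ?_⟩
  refine h3 (D ∩ {x | T x = T' x}) ?_ ?_
  · rw [Set.compl_inter]
    exact measure_union_null hD he
  · exact (hc.mono Set.inter_subset_left).congr fun x hx => hx.2
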